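/- Let α ∈ ℂ with Re(α) > 0, let a < b be real, let φ ∈ C¹[a,b] with φ′(t) > 0 for all t ∈ [a,b], and let f ∈ L¹(a,b). Then D_{a+}^{α,φ} I_{a+}^{α,φ} f(x) = f(x) holds for almost every x ∈ [a,b]. -/

import Mathlib

open MeasureTheory Filter Set Finset Topology

noncomputable section

namespace FracDE

/-- The `φ`-derivative operator `f ↦ (1/φ′) f′`. -/
def phiD (φ : ℝ → ℝ) (f : ℝ → ℂ) : ℝ → ℂ :=
  fun x => ((deriv φ x : ℝ) : ℂ)⁻¹ * deriv f x

/-- The Riemann–Liouville fractional integral of order `α` with respect to `φ`, based at `a`: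
`(I_{a+}^{α,φ} f)(x) = (1/Γ(α)) ∫_a^x φ′(t) (φ(x) − φ(t))^{α−1} f(t) dt`. -/
def RLI (α : ℂ) (a : ℝ) (φ : ℝ → ℝ) (f : ℝ → ℂ) (x : ℝ) : ℂ :=
  (Complex.Gamma α)⁻¹ *
    ∫ t in a..x, ((deriv φ t : ℝ) : ℂ) * (((φ x - φ t : ℝ) : ℂ) ^ (α - 1)) * f t

/-- `n = ⌊Re α⌋ + 1`. -/
def rlN (α : ℂ) : ℕ := ⌊α.re⌋.toNat + 1

/-- The Riemann–Liouville fractional derivative of order `α` with respect to `φ`: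
`(D_{a+}^{α,φ} f)(x) = ((1/φ′(x)) d/dx)^n (I_{a+}^{n−α,φ} f)(x)`, `n = ⌊Re α⌋ + 1`. -/
def RLD (α : ℂ) (a : ℝ) (φ : ℝ → ℝ) (f : ℝ → ℂ) : ℝ → ℂ :=
  (phiD φ)^[rlN α] (RLI ((rlN α : ℂ) - α) a φ f)

open Classical in
/-- The integer `n` used in the modified Caputo-type derivative:
`n = α` if `α ∈ ℕ`, and `n = ⌊Re α⌋ + 1` otherwise. -/
def capN (α : ℂ) : ℕ := if ∃ n : ℕ, α = n then ⌊α.re⌋.toNat else ⌊α.re⌋.toNat + 1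

/-- The Taylor-type polynomial `Σ_{j<n} ((1/φ′) d/dt)^j f (a) / j! · (φ(t) − φ(a))^j`. -/
def phiTaylor (n : ℕ) (a : ℝ) (φ : ℝ → ℝ) (f : ℝ → ℂ) (t : ℝ) : ℂ :=
  ∑ j ∈ Finset.range n, ((phiD φ)^[j] f a / (Nat.factorial j : ℂ)) * ((φ t - φ a : ℝ) : ℂ) ^ j

/-- The modified Caputo-type fractional derivative with respect to `φ`. -/
def CapD (α : ℂ) (a : ℝ) (φ : ℝ → ℝ) (f : ℝ → ℂ) : ℝ → ℂ :=
  RLD α a φ (fun t => f t - phiTaylor (capN α) a φ f t)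

/-- `φ ∈ C¹[a,b]` with `φ′ > 0` on `[a,b]`. -/
structure IsC1Pos (φ : ℝ → ℝ) (a b : ℝ) : Prop where
  deriv_at : ∀ t ∈ Set.Icc a b, HasDerivAt φ (deriv φ t) t
  continuous_deriv : ContinuousOn (deriv φ) (Set.Icc a b)
  deriv_pos : ∀ t ∈ Set.Icc a b, 0 < deriv φ t

/-- The sup-norm on `[0,T]`. -/
def maxNorm (T : ℝ) (f : ℝ → ℂ) : ℝ := sSup ((fun t => ‖f t‖) '' Set.Icc 0 T)

/-- Membership in the space `C^{n₀−1,β₀}[0,T]`. -/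
def MemCspace (T : ℝ) (φ : ℝ → ℝ) (β0 : ℂ) (x : ℝ → ℂ) : Prop :=
  ContDiffOn ℝ (rlN β0 - 1 : ℕ) x (Set.Icc 0 T) ∧
    ContinuousOn (CapD β0 0 φ x) (Set.Icc 0 T)

/-- The norm of the space `C^{n₀−1,β₀}[0,T]`. -/
def normCspace (T : ℝ) (φ : ℝ → ℝ) (β0 : ℂ) (x : ℝ → ℂ) : ℝ :=
  (∑ k ∈ Finset.range (rlN β0), maxNorm T ((phiD φ)^[k] x)) + maxNorm T (CapD β0 0 φ x)

/-- The ordering assumptions on the orders `β₀, …, β_m`: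
`Re β₀ > Re β₁ > … > Re β_m ≥ 0`, and `β_m = 0` whenever `Re β_m = 0`. -/
def BetaChain (m : ℕ) (β : ℕ → ℂ) : Prop :=
  (∀ i < m, (β (i + 1)).re < (β i).re) ∧ 0 ≤ (β m).re ∧ ((β m).re = 0 → β m = 0)

/-- `x` solves `^C D^{β₀,φ} x(t) + Σ_{i=1}^m d_i(t) ^C D^{β_i,φ} x(t) = h(t)` on `[0,T]`. -/
def SolvesE (T : ℝ) (φ : ℝ → ℝ) (m : ℕ) (β : ℕ → ℂ) (d : ℕ → ℝ → ℂ) (h x : ℝ → ℂ) : Prop :=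
  ∀ t ∈ Set.Icc 0 T,
    CapD (β 0) 0 φ x t + ∑ i ∈ Finset.Icc 1 m, d i t * CapD (β i) 0 φ x t = h t

/-- The initial conditions `((1/φ′) d/dt)^k x (0+) = c_k`, `k = 0, …, n₀−1`. -/
def InitCond (φ : ℝ → ℝ) (n0 : ℕ) (c : ℕ → ℂ) (x : ℝ → ℂ) : Prop :=
  ∀ k < n0, Filter.Tendsto ((phiD φ)^[k] x) (nhdsWithin 0 (Set.Ioi 0)) (nhds (c k))

/-- The growth condition (G): there are `ν > 0` and `0 < C < 1` with
`Σ_{i=1}^m bound_i ‖(I^{β₀−β_i,φ} e^{ν·})(t)‖ ≤ C e^{ν t}` on `[0,T]`. -/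
def GrowthCond (T : ℝ) (φ : ℝ → ℝ) (m : ℕ) (β : ℕ → ℂ) (bound : ℕ → ℝ) : Prop :=
  ∃ ν : ℝ, 0 < ν ∧ ∃ C : ℝ, 0 < C ∧ C < 1 ∧ ∀ t ∈ Set.Icc 0 T,
    ∑ i ∈ Finset.Icc 1 m,
      bound i * ‖RLI (β 0 - β i) 0 φ (fun s => (Real.exp (ν * s) : ℂ)) t‖
      ≤ C * Real.exp (ν * t)

/-- The operator `f ↦ Σ_{i=1}^m d_i(·) I^{β₀−β_i,φ} f`. -/
def opS (φ : ℝ → ℝ) (m : ℕ) (β : ℕ → ℂ) (d : ℕ → ℝ → ℂ) (f : ℝ → ℂ) : ℝ → ℂ :=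
  fun t => ∑ i ∈ Finset.Icc 1 m, d i t * RLI (β 0 - β i) 0 φ f t

/-- The successive-approximation sequence `x₀ = I^{β₀,φ} h`,
`x_n = x₀ − I^{β₀,φ} Σ_i d_i ^C D^{β_i,φ} x_{n−1}`. -/
def apxSeq (φ : ℝ → ℝ) (m : ℕ) (β : ℕ → ℂ) (d : ℕ → ℝ → ℂ) (h : ℝ → ℂ) : ℕ → ℝ → ℂ
  | 0 => RLI (β 0) 0 φ h
  | n + 1 => fun t => RLI (β 0) 0 φ h t -
      RLI (β 0) 0 φ
        (fun s => ∑ i ∈ Finset.Icc 1 m, d i s * CapD (β i) 0 φ (apxSeq φ m β d h n) s) t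

/-- `Ψ_j(t) = (φ(t) − φ(0))^j / Γ(j+1)`. -/
def Psi (φ : ℝ → ℝ) (j : ℕ) (t : ℝ) : ℂ :=
  ((φ t - φ 0 : ℝ) : ℂ) ^ j / (Nat.factorial j : ℂ)

/-- The set `K_j = {i : 1 ≤ i ≤ m, Re β_i ≤ j}`. -/
def Kset (m : ℕ) (β : ℕ → ℂ) (j : ℕ) : Set ℕ :=
  {i : ℕ | 1 ≤ i ∧ i ≤ m ∧ (β i).re ≤ (j : ℝ)}

/-- `ϰ_j = min K_j`. -/
def kappa (m : ℕ) (β : ℕ → ℂ) (j : ℕ) : ℕ := sInf (Kset m β j)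

/-- `X` is a canonical set of solutions of the homogeneous equation (E₀). -/
def IsCanonicalSet (T : ℝ) (φ : ℝ → ℝ) (m : ℕ) (β : ℕ → ℂ) (d : ℕ → ℝ → ℂ)
    (X : ℕ → ℝ → ℂ) : Prop :=
  ∀ j < rlN (β 0),
    SolvesE T φ m β d (fun _ => 0) (X j) ∧
    ∀ k < rlN (β 0),
      Filter.Tendsto ((phiD φ)^[k] (X j)) (nhdsWithin 0 (Set.Ioi 0))
        (nhds (if k = j then 1 else 0))

/-- The multivariate Mittag-Leffler function `E_{(a₁,…,a_n),b}(z₁,…,z_n)`. -/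
def mvML (n : ℕ) (a : Fin n → ℂ) (b : ℂ) (z : Fin n → ℂ) : ℂ :=
  ∑' k : ℕ, ∑ l ∈ Finset.Nat.antidiagonalTuple n k,
    (Nat.multinomial Finset.univ l : ℂ) * (∏ i, z i ^ l i) /
      Complex.Gamma (b + ∑ i, a i * (l i : ℂ))

/-- `g ∈ AC^n[a,b]`: the `(n−1)`-st derivative of `g` is absolutely continuous on `[a,b]`. -/
def ACn (n : ℕ) (a b : ℝ) (g : ℝ → ℂ) : Prop :=
  ContDiffOn ℝ (n - 1 : ℕ) g (Set.Icc a b) ∧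
  ∃ g' : ℝ → ℂ, IntervalIntegrable g' volume a b ∧
    ∀ x ∈ Set.Icc a b, iteratedDeriv (n - 1) g x = iteratedDeriv (n - 1) g a + ∫ t in a..x, g' t

end FracDE

namespace FracDE

variable {φ : ℝ → ℝ} {a b : ℝ}

lemma IsC1Pos.continuousOn (hφ : IsC1Pos φ a b) : ContinuousOn φ (Set.Icc a b) :=
  fun t ht => (hφ.deriv_at t ht).continuousAt.continuousWithinAt

lemma IsC1Pos.strictMonoOn (hφ : IsC1Pos φ a b) : StrictMonoOn φ (Set.Icc a b) :=
  strictMonoOn_of_deriv_pos (convex_Icc a b) hφ.continuousOn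
    fun t ht => hφ.deriv_pos t (interior_subset ht)

lemma IsC1Pos.mono (hφ : IsC1Pos φ a b) {s x : ℝ} (h : Set.Icc s x ⊆ Set.Icc a b) : IsC1Pos φ s x :=
  ⟨fun t ht => hφ.deriv_at t (h ht), hφ.continuous_deriv.mono h, fun t ht => hφ.deriv_pos t (h ht)⟩

/-- The affine renormalisation of `φ` maps `(s, x)` onto `(0, 1)`. -/
lemma IsC1Pos.image_normalized {s x : ℝ} (hφ : IsC1Pos φ s x) (hsx : s < x) :
    (fun t => (φ t - φ s) / (φ x - φ s)) '' Set.Ioo s x = Set.Ioo 0 1 := by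
  have hs : s ∈ Set.Icc s x := left_mem_Icc.2 hsx.le
  have hx : x ∈ Set.Icc s x := right_mem_Icc.2 hsx.le
  have hL : 0 < φ x - φ s := sub_pos.2 (hφ.strictMonoOn hs hx hsx)
  apply Set.Subset.antisymm
  · rintro _ ⟨t, ht, rfl⟩
    have h1 := hφ.strictMonoOn hs (Ioo_subset_Icc_self ht) ht.1
    have h2 := hφ.strictMonoOn (Ioo_subset_Icc_self ht) hx ht.2
    exact ⟨div_pos (by linarith) hL, (div_lt_one hL).2 (by linarith)⟩
  · have hc : ContinuousOn (fun t => (φ t - φ s) / (φ x - φ s)) (Set.Icc s x) :=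
      (hφ.continuousOn.sub continuousOn_const).div_const _
    have := intermediate_value_Ioo hsx.le hc
    simpa [div_self hL.ne'] using this

/-- Change of variables `u = (φ t - φ s) / (φ x - φ s)` from `(s, x)` to `(0, 1)`. -/
lemma IsC1Pos.changeOfVariables {E : Type*} [NormedAddCommGroup E] [NormedSpace ℝ E] {s x : ℝ}
    (hφ : IsC1Pos φ s x) (hsx : s < x) {g : ℝ → E} (hg : IntegrableOn g (Set.Ioo 0 1)) :
    IntegrableOn (fun t => (deriv φ t / (φ x - φ s)) • g ((φ t - φ s) / (φ x - φ s))) (Set.Ioo s x) ∧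
      ∫ t in Set.Ioo s x, (deriv φ t / (φ x - φ s)) • g ((φ t - φ s) / (φ x - φ s)) =
        ∫ u in Set.Ioo 0 1, g u := by
  have hs : s ∈ Set.Icc s x := left_mem_Icc.2 hsx.le
  have hx : x ∈ Set.Icc s x := right_mem_Icc.2 hsx.le
  have hL : 0 < φ x - φ s := sub_pos.2 (hφ.strictMonoOn hs hx hsx)
  have hd : ∀ t ∈ Set.Ioo s x, HasDerivWithinAt (fun t => (φ t - φ s) / (φ x - φ s))
      (deriv φ t / (φ x - φ s)) (Set.Ioo s x) t := fun t ht =>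
    (((hφ.deriv_at t (Ioo_subset_Icc_self ht)).sub_const _).div_const _).hasDerivWithinAt
  have hinj : InjOn (fun t => (φ t - φ s) / (φ x - φ s)) (Set.Ioo s x) := by
    intro t ht u hu htu
    have : φ t = φ u := by
      have := (div_left_inj' hL.ne').1 htu
      linarith
    exact hφ.strictMonoOn.injOn (Ioo_subset_Icc_self ht) (Ioo_subset_Icc_self hu) this
  have habs : EqOn
      (fun t => |deriv φ t / (φ x - φ s)| • g ((φ t - φ s) / (φ x - φ s)))
      (fun t => (deriv φ t / (φ x - φ s)) • g ((φ t - φ s) / (φ x - φ s))) (Set.Ioo s x) := by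
    intro t ht
    simp only
    rw [abs_of_pos (div_pos (hφ.deriv_pos t (Ioo_subset_Icc_self ht)) hL)]
  rw [← hφ.image_normalized hsx] at hg ⊢
  constructor
  · exact ((integrableOn_image_iff_integrableOn_abs_deriv_smul measurableSet_Ioo hd hinj g).1
      hg).congr_fun habs measurableSet_Ioo
  · rw [integral_image_eq_integral_abs_deriv_smul measurableSet_Ioo hd hinj g]
    exact (setIntegral_congr_fun measurableSet_Ioo habs).symm

/-- The kernel of the composition of two fractional integrals. -/
def compKernel (α β : ℂ) (φ : ℝ → ℝ) (s x t : ℝ) : ℂ :=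
  ((deriv φ t : ℝ) : ℂ) * ((φ x - φ t : ℝ) : ℂ) ^ (β - 1) * ((φ t - φ s : ℝ) : ℂ) ^ (α - 1)

/-- The integrand of the Beta integral. -/
def betaIntegrand (α β : ℂ) (u : ℝ) : ℂ := (u : ℂ) ^ (α - 1) * (1 - (u : ℂ)) ^ (β - 1)

lemma integrableOn_betaIntegrand {α β : ℂ} (hα : 0 < α.re) (hβ : 0 < β.re) :
    IntegrableOn (betaIntegrand α β) (Set.Ioo 0 1) :=
  ((intervalIntegrable_iff_integrableOn_Ioc_of_le zero_le_one).1
    (Complex.betaIntegral_convergent hα hβ)).mono_set Ioo_subset_Ioc_self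

lemma integral_betaIntegrand (α β : ℂ) :
    ∫ u in Set.Ioo 0 1, betaIntegrand α β u = Complex.betaIntegral α β := by
  rw [Complex.betaIntegral, intervalIntegral.integral_of_le zero_le_one,
    integral_Ioc_eq_integral_Ioo]
  rfl

lemma IsC1Pos.compKernel_eq {s x t : ℝ} (hφ : IsC1Pos φ s x) (hsx : s < x) (ht : t ∈ Set.Ioo s x)
    (α β : ℂ) :
    compKernel α β φ s x t = ((φ x - φ s : ℝ) : ℂ) ^ (α + β - 1) *
      ((deriv φ t / (φ x - φ s)) • betaIntegrand α β ((φ t - φ s) / (φ x - φ s))) := by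
  have hs : s ∈ Set.Icc s x := left_mem_Icc.2 hsx.le
  have hx : x ∈ Set.Icc s x := right_mem_Icc.2 hsx.le
  have hL : 0 < φ x - φ s := sub_pos.2 (hφ.strictMonoOn hs hx hsx)
  have h1 : 0 < φ t - φ s := sub_pos.2 (hφ.strictMonoOn hs (Ioo_subset_Icc_self ht) ht.1)
  have h2 : 0 < φ x - φ t := sub_pos.2 (hφ.strictMonoOn (Ioo_subset_Icc_self ht) hx ht.2)
  set L := φ x - φ s with hLdef
  have hLc : (L : ℂ) ≠ 0 := Complex.ofReal_ne_zero.2 hL.ne'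
  have e1 : φ t - φ s = L * ((φ t - φ s) / L) := by field_simp
  have e2 : φ x - φ t = L * (1 - (φ t - φ s) / L) := by field_simp; rw [hLdef]; ring
  have hu : 0 < (φ t - φ s) / L := div_pos h1 hL
  have hv : 0 ≤ 1 - (φ t - φ s) / L := by
    rw [e2] at h2
    exact (pos_of_mul_pos_right h2 hL.le).le
  have hpow : (L : ℂ) ^ (α + β - 1) = (L : ℂ) * (L : ℂ) ^ (α - 1) * (L : ℂ) ^ (β - 1) := by
    rw [show α + β - 1 = 1 + (α - 1) + (β - 1) by ring, Complex.cpow_add _ _ hLc,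
      Complex.cpow_add _ _ hLc, Complex.cpow_one]
  have p1 : ((φ t - φ s : ℝ) : ℂ) ^ (α - 1) =
      (L : ℂ) ^ (α - 1) * (((φ t - φ s) / L : ℝ) : ℂ) ^ (α - 1) := by
    rw [← Complex.mul_cpow_ofReal_nonneg hL.le hu.le, ← Complex.ofReal_mul, ← e1]
  have p2 : ((φ x - φ t : ℝ) : ℂ) ^ (β - 1) =
      (L : ℂ) ^ (β - 1) * (1 - (((φ t - φ s) / L : ℝ) : ℂ)) ^ (β - 1) := by
    rw [← Complex.ofReal_one, ← Complex.ofReal_sub, ← Complex.mul_cpow_ofReal_nonneg hL.le hv,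
      ← Complex.ofReal_mul, ← e2]
  rw [compKernel, betaIntegrand, p1, p2, hpow, Complex.real_smul, Complex.ofReal_div (deriv φ t)]
  field_simp

lemma IsC1Pos.integrableOn_compKernel {s x : ℝ} (hφ : IsC1Pos φ s x) (hsx : s < x) {α β : ℂ}
    (hα : 0 < α.re) (hβ : 0 < β.re) : IntegrableOn (compKernel α β φ s x) (Set.Ioo s x) := by
  refine IntegrableOn.congr_fun (Integrable.const_mul
    (hφ.changeOfVariables hsx (integrableOn_betaIntegrand hα hβ)).1 _)
    (fun t ht => (hφ.compKernel_eq hsx ht α β).symm) measurableSet_Ioo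

lemma IsC1Pos.integral_compKernel {s x : ℝ} (hφ : IsC1Pos φ s x) (hsx : s < x) {α β : ℂ}
    (hα : 0 < α.re) (hβ : 0 < β.re) :
    ∫ t in Set.Ioo s x, compKernel α β φ s x t =
      ((φ x - φ s : ℝ) : ℂ) ^ (α + β - 1) * Complex.betaIntegral α β := by
  rw [setIntegral_congr_fun measurableSet_Ioo fun t ht => hφ.compKernel_eq hsx ht α β,
    integral_const_mul, (hφ.changeOfVariables hsx (integrableOn_betaIntegrand hα hβ)).2,
    integral_betaIntegrand]

lemma IsC1Pos.integral_norm_compKernel {s x : ℝ} (hφ : IsC1Pos φ s x) (hsx : s < x) {α β : ℂ}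
    (hα : 0 < α.re) (hβ : 0 < β.re) :
    ∫ t in Set.Ioo s x, ‖compKernel α β φ s x t‖ =
      (φ x - φ s) ^ ((α + β).re - 1) * ∫ u in Set.Ioo 0 1, ‖betaIntegrand α β u‖ := by
  have hL : 0 < φ x - φ s :=
    sub_pos.2 (hφ.strictMonoOn (left_mem_Icc.2 hsx.le) (right_mem_Icc.2 hsx.le) hsx)
  rw [← (hφ.changeOfVariables hsx (integrableOn_betaIntegrand hα hβ).norm).2,
    ← integral_const_mul]
  refine setIntegral_congr_fun measurableSet_Ioo fun t ht => ?_
  rw [hφ.compKernel_eq hsx ht α β, norm_mul, Complex.norm_cpow_eq_rpow_re_of_pos hL, norm_smul,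
    Real.norm_of_nonneg (div_pos (hφ.deriv_pos t (Ioo_subset_Icc_self ht)) hL).le, smul_eq_mul]
  simp

lemma IsC1Pos.integrableOn_deriv_mul (hφ : IsC1Pos φ a b) {f : ℝ → ℂ}
    (hf : IntegrableOn f (Set.Icc a b)) : IntegrableOn (fun t => ((deriv φ t : ℝ) : ℂ) * f t) (Set.Icc a b) :=
  hf.continuousOn_mul (Complex.continuous_ofReal.comp_continuousOn hφ.continuous_deriv)
    isCompact_Icc

/-- The double integrand arising from composing two fractional integrals. -/
def compIntegrand (α β : ℂ) (φ : ℝ → ℝ) (f : ℝ → ℂ) (x s t : ℝ) : ℂ :=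
  (Set.Ioi s).indicator (compKernel α β φ s x) t * (((deriv φ s : ℝ) : ℂ) * f s)

lemma IsC1Pos.aestronglyMeasurable_compIntegrand {x : ℝ} (hφ : IsC1Pos φ a x) (α β : ℂ)
    {f : ℝ → ℂ} (hf : IntegrableOn f (Set.Icc a x)) :
    AEStronglyMeasurable (Function.uncurry (compIntegrand α β φ f x))
      ((volume.restrict (Set.Ioo a x)).prod (volume.restrict (Set.Ioo a x))) := by
  have hφm : AEMeasurable φ (volume.restrict (Set.Ioo a x)) :=
    (hφ.continuousOn.mono Ioo_subset_Icc_self).aemeasurable measurableSet_Ioo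
  have hdm : Measurable fun t => ((deriv φ t : ℝ) : ℂ) :=
    Complex.measurable_ofReal.comp (measurable_deriv φ)
  have hfm : AEStronglyMeasurable (fun s => ((deriv φ s : ℝ) : ℂ) * f s) (volume.restrict (Set.Ioo a x)) :=
    ((hφ.integrableOn_deriv_mul hf).mono_set Ioo_subset_Icc_self).aestronglyMeasurable
  have hk : AEMeasurable (fun p : ℝ × ℝ => compKernel α β φ p.1 x p.2)
      ((volume.restrict (Set.Ioo a x)).prod (volume.restrict (Set.Ioo a x))) := by
    unfold compKernel
    have h1 := hφm.comp_fst (ν := volume.restrict (Set.Ioo a x))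
    have h2 := hφm.comp_snd (μ := volume.restrict (Set.Ioo a x))
    refine ((hdm.comp measurable_snd).aemeasurable.mul ?_).mul ?_
    · exact (Complex.measurable_ofReal.comp_aemeasurable (h2.const_sub _)).pow_const _
    · exact (Complex.measurable_ofReal.comp_aemeasurable (h2.sub h1)).pow_const _
  have hi : MeasurableSet {p : ℝ × ℝ | p.1 < p.2} := measurableSet_lt measurable_fst measurable_snd
  exact (hk.indicator hi).aestronglyMeasurable.mul hfm.comp_fst

lemma Ioo_inter_Ioi_of_mem {x s : ℝ} (hs : s ∈ Set.Ioo a x) : Set.Ioo a x ∩ Set.Ioi s = Set.Ioo s x := by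
  ext t; simp only [mem_inter_iff, Set.mem_Ioo, Set.mem_Ioi] at *; constructor <;> intro h <;> grind

lemma IsC1Pos.integrable_compIntegrand {x : ℝ} (hφ : IsC1Pos φ a x) {α β : ℂ}
    (hα : 0 < α.re) (hβ : 0 < β.re) (hαβ : 1 ≤ (α + β).re)
    {f : ℝ → ℂ} (hf : IntegrableOn f (Set.Icc a x)) :
    Integrable (Function.uncurry (compIntegrand α β φ f x))
      ((volume.restrict (Set.Ioo a x)).prod (volume.restrict (Set.Ioo a x))) := by
  have hsub : ∀ s ∈ Set.Ioo a x, IsC1Pos φ s x := fun s hs =>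
    hφ.mono (Icc_subset_Icc_left hs.1.le)
  rw [integrable_prod_iff (hφ.aestronglyMeasurable_compIntegrand α β hf)]
  constructor
  · refine (ae_restrict_iff' measurableSet_Ioo).2 (Eventually.of_forall fun s hs => ?_)
    simp only [Function.uncurry, compIntegrand]
    refine Integrable.mul_const ?_ _
    rw [integrable_indicator_iff measurableSet_Ioi, IntegrableOn,
      Measure.restrict_restrict measurableSet_Ioi, inter_comm, Ioo_inter_Ioi_of_mem hs]
    exact (hsub s hs).integrableOn_compKernel hs.2 hα hβ
  · set C := ∫ u in Set.Ioo 0 1, ‖betaIntegrand α β u‖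
    have hc : ContinuousOn (fun s => (φ x - φ s) ^ ((α + β).re - 1) * C) (Set.Icc a x) :=
      ((continuousOn_const.sub hφ.continuousOn).rpow_const
        fun _ _ => Or.inr (by linarith)).mul continuousOn_const
    have := (IntegrableOn.continuousOn_mul hc (hφ.integrableOn_deriv_mul hf).norm
      isCompact_Icc).mono_set Ioo_subset_Icc_self
    refine IntegrableOn.congr_fun this (fun s hs => ?_) measurableSet_Ioo
    simp only [Function.uncurry, compIntegrand, norm_mul _ (_ * f s),
      norm_indicator_eq_indicator_norm]
    rw [integral_mul_const, setIntegral_indicator measurableSet_Ioi, Ioo_inter_Ioi_of_mem hs,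
      (hsub s hs).integral_norm_compKernel hs.2 hα hβ]

/-- Semigroup property of the fractional integrals, valid at every point once
`1 ≤ Re (α + β)`. -/
lemma IsC1Pos.RLI_RLI (hφ : IsC1Pos φ a b) {α β : ℂ} (hα : 0 < α.re) (hβ : 0 < β.re)
    (hαβ : 1 ≤ (α + β).re) {f : ℝ → ℂ} (hf : IntegrableOn f (Set.Icc a b)) {x : ℝ}
    (hx : x ∈ Set.Icc a b) : RLI β a φ (RLI α a φ f) x = RLI (α + β) a φ f x := by
  replace hφ := hφ.mono (Icc_subset_Icc_right hx.2)
  replace hf := hf.mono_set (Icc_subset_Icc_right hx.2)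
  have hax := hx.1
  have hleft : ∀ t ∈ Set.Ioo a x,
      ((deriv φ t : ℝ) : ℂ) * ((φ x - φ t : ℝ) : ℂ) ^ (β - 1) * RLI α a φ f t =
        (Complex.Gamma α)⁻¹ * ∫ s in Set.Ioo a x, compIntegrand α β φ f x s t := by
    intro t ht
    have hind : (fun s => compIntegrand α β φ f x s t) = (Set.Iio t).indicator fun s =>
        ((deriv φ t : ℝ) : ℂ) * ((φ x - φ t : ℝ) : ℂ) ^ (β - 1) *
          (((deriv φ s : ℝ) : ℂ) * ((φ t - φ s : ℝ) : ℂ) ^ (α - 1) * f s) := by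
      ext s
      by_cases h : s < t
      · simp [compIntegrand, compKernel, h]; ring
      · simp [compIntegrand, h]
    have hset : Set.Ioo a x ∩ Set.Iio t = Set.Ioo a t := by
      ext s; simp only [mem_inter_iff, Set.mem_Ioo, Set.mem_Iio] at *; constructor <;> intro h <;> grind
    rw [hind, setIntegral_indicator measurableSet_Iio, hset, integral_const_mul, RLI,
      intervalIntegral.integral_of_le ht.1.le, integral_Ioc_eq_integral_Ioo]
    ring
  have hright : ∀ s ∈ Set.Ioo a x, ∫ t in Set.Ioo a x, compIntegrand α β φ f x s t =
      Complex.betaIntegral α β *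
        (((deriv φ s : ℝ) : ℂ) * ((φ x - φ s : ℝ) : ℂ) ^ (α + β - 1) * f s) := by
    intro s hs
    simp only [compIntegrand]
    rw [integral_mul_const, setIntegral_indicator measurableSet_Ioi, Ioo_inter_Ioi_of_mem hs,
      (hφ.mono (Icc_subset_Icc_left hs.1.le)).integral_compKernel hs.2 hα hβ]
    ring
  have hΓ := Complex.Gamma_mul_Gamma_eq_betaIntegral hα hβ
  have hΓα := Complex.Gamma_ne_zero_of_re_pos hα
  have hΓβ := Complex.Gamma_ne_zero_of_re_pos hβ
  have hΓαβ := Complex.Gamma_ne_zero_of_re_pos (zero_lt_one.trans_le hαβ)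
  rw [RLI, RLI, intervalIntegral.integral_of_le hax, intervalIntegral.integral_of_le hax,
    integral_Ioc_eq_integral_Ioo, integral_Ioc_eq_integral_Ioo,
    setIntegral_congr_fun measurableSet_Ioo hleft, integral_const_mul,
    ← integral_integral_swap (hφ.integrable_compIntegrand hα hβ hαβ hf),
    setIntegral_congr_fun measurableSet_Ioo hright, integral_const_mul]
  field_simp
  rw [mul_comm (Complex.Gamma β), hΓ]
  ring

lemma RLI_one (f : ℝ → ℂ) (x : ℝ) : RLI 1 a φ f x = ∫ t in a..x, ((deriv φ t : ℝ) : ℂ) * f t := by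
  simp [RLI]

lemma IsC1Pos.continuousOn_RLI_one (hφ : IsC1Pos φ a b) {f : ℝ → ℂ}
    (hf : IntegrableOn f (Set.Icc a b)) : ContinuousOn (RLI 1 a φ f) (Set.Icc a b) := by
  rw [funext (RLI_one f)]
  rcases le_or_gt a b with hab | hab
  · have hi := hφ.integrableOn_deriv_mul hf
    rw [← uIcc_of_le hab] at hi ⊢
    exact intervalIntegral.continuousOn_primitive_interval hi
  · simp [Set.Icc_eq_empty_of_lt hab]

lemma IsC1Pos.RLI_nat_succ (hφ : IsC1Pos φ a b) {f : ℝ → ℂ} (hf : IntegrableOn f (Set.Icc a b))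
    (k : ℕ) : EqOn (RLI (k + 1 + 1) a φ f) (RLI 1 a φ (RLI (k + 1) a φ f)) (Set.Icc a b) := by
  intro x hx
  refine (hφ.RLI_RLI ?_ ?_ ?_ hf hx).symm
  · simp; positivity
  · simp
  · simp; positivity

lemma IsC1Pos.continuousOn_RLI_nat (hφ : IsC1Pos φ a b) {f : ℝ → ℂ}
    (hf : IntegrableOn f (Set.Icc a b)) (k : ℕ) : ContinuousOn (RLI (k + 1) a φ f) (Set.Icc a b) := by
  induction k with
  | zero => simpa using hφ.continuousOn_RLI_one hf
  | succ k ih =>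
    push_cast
    exact (hφ.continuousOn_RLI_one (ih.integrableOn_compact isCompact_Icc)).congr
      (hφ.RLI_nat_succ hf k)

lemma IsC1Pos.phiD_RLI_one (hφ : IsC1Pos φ a b) {g : ℝ → ℂ} (hg : ContinuousOn g (Set.Icc a b)) :
    EqOn (phiD φ (RLI 1 a φ g)) g (Set.Ioo a b) := by
  intro x hx
  have hx' := Ioo_subset_Icc_self hx
  have hc : ContinuousOn (fun t => ((deriv φ t : ℝ) : ℂ) * g t) (Set.Icc a b) :=
    (Complex.continuous_ofReal.comp_continuousOn hφ.continuous_deriv).mul hg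
  have hd : HasDerivAt (fun x => ∫ t in a..x, ((deriv φ t : ℝ) : ℂ) * g t) (((deriv φ x : ℝ) : ℂ) * g x) x := by
    refine intervalIntegral.integral_hasDerivAt_right ?_ ?_ ?_
    · refine (hc.mono ?_).intervalIntegrable
      rw [uIcc_of_le hx.1.le]
      exact Icc_subset_Icc_right hx.2.le
    · exact (hc.mono Ioo_subset_Icc_self).stronglyMeasurableAtFilter isOpen_Ioo x hx
    · exact hc.continuousAt (Icc_mem_nhds hx.1 hx.2)
  have hne : ((deriv φ x : ℝ) : ℂ) ≠ 0 := Complex.ofReal_ne_zero.2 (hφ.deriv_pos x hx').ne'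
  rw [phiD, funext (RLI_one g), hd.deriv, inv_mul_cancel_left₀ hne]

lemma phiD_eqOn {g h : ℝ → ℂ} {U : Set ℝ} (hU : IsOpen U) (hgh : EqOn g h U) :
    EqOn (phiD φ g) (phiD φ h) U := by
  intro x hx
  rw [phiD, phiD, (hgh.eventuallyEq_of_mem (hU.mem_nhds hx)).deriv_eq]

lemma IsC1Pos.phiD_iterate_RLI (hφ : IsC1Pos φ a b) {f : ℝ → ℂ} (hf : IntegrableOn f (Set.Icc a b))
    (k : ℕ) {g : ℝ → ℂ} (hg : EqOn g (RLI (k + 1) a φ f) (Set.Ioo a b)) :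
    EqOn ((phiD φ)^[k] g) (RLI 1 a φ f) (Set.Ioo a b) := by
  induction k generalizing g with
  | zero => simpa using hg
  | succ k ih =>
    rw [Function.iterate_succ_apply]
    refine ih (EqOn.trans (phiD_eqOn isOpen_Ioo (hg.trans ?_))
      (hφ.phiD_RLI_one (hφ.continuousOn_RLI_nat hf k)))
    push_cast
    exact (hφ.RLI_nat_succ hf k).mono Ioo_subset_Icc_self

lemma IsC1Pos.ae_phiD_RLI_one (hφ : IsC1Pos φ a b) (hab : a < b) {f : ℝ → ℂ}
    (hf : IntegrableOn f (Set.Icc a b)) :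
    ∀ᵐ x, x ∈ Set.Icc a b → phiD φ (RLI 1 a φ f) x = f x := by
  have hi : IntervalIntegrable (fun t => ((deriv φ t : ℝ) : ℂ) * f t) volume a b :=
    (intervalIntegrable_iff_integrableOn_Icc_of_le hab.le).2 (hφ.integrableOn_deriv_mul hf)
  filter_upwards [hi.ae_hasDerivAt_integral] with x hx hxm
  rw [uIcc_of_le hab.le] at hx
  have hne : ((deriv φ x : ℝ) : ℂ) ≠ 0 := Complex.ofReal_ne_zero.2 (hφ.deriv_pos x hxm).ne'
  rw [phiD, funext (RLI_one f), (hx hxm a (left_mem_Icc.2 hab.le)).deriv,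
    inv_mul_cancel_left₀ hne]

end FracDE


/-- For `α ∈ ℂ` with `Re α > 0`, `a < b`, `φ ∈ C¹[a,b]` with `φ′ > 0`,
and `f ∈ L¹(a,b)`, one has `D_{a+}^{α,φ} I_{a+}^{α,φ} f = f` a.e. on `[a,b]`. -/
theorem statement0 (α : ℂ) (hα : 0 < α.re) (a b : ℝ) (hab : a < b)
    (φ : ℝ → ℝ) (hφ : FracDE.IsC1Pos φ a b)
    (f : ℝ → ℂ) (hf : MeasureTheory.IntegrableOn f (Set.Icc a b)) :
    ∀ᵐ x ∂(volume : Measure ℝ), x ∈ Set.Icc a b →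
      FracDE.RLD α a φ (FracDE.RLI α a φ f) x = f x := by
  have hn : FracDE.rlN α = ⌊α.re⌋.toNat + 1 := rfl
  have hfloor : ((⌊α.re⌋.toNat : ℕ) : ℝ) = (⌊α.re⌋ : ℝ) := by
    exact_mod_cast Int.toNat_of_nonneg (Int.floor_nonneg.2 hα.le)
  have hβ : 0 < ((FracDE.rlN α : ℂ) - α).re := by
    rw [hn]
    simp only [Complex.sub_re, Complex.natCast_re]
    push_cast
    rw [hfloor]
    linarith [Int.lt_floor_add_one α.re]
  have hsemi : EqOn (FracDE.RLI ((FracDE.rlN α : ℂ) - α) a φ (FracDE.RLI α a φ f))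
      (FracDE.RLI ((⌊α.re⌋.toNat : ℂ) + 1) a φ f) (Set.Ioo a b) := by
    intro x hx
    have hsum : α + ((FracDE.rlN α : ℂ) - α) = (⌊α.re⌋.toNat : ℂ) + 1 := by
      rw [hn]; push_cast; ring
    rw [← hsum]
    refine hφ.RLI_RLI hα hβ ?_ hf (Ioo_subset_Icc_self hx)
    rw [hsum]
    simp
  have hiter := FracDE.phiD_eqOn (φ := φ) isOpen_Ioo (hφ.phiD_iterate_RLI hf _ hsemi)
  have hne : ∀ c : ℝ, ∀ᵐ x : ℝ, x ≠ c := fun c => by simp [ae_iff, measure_singleton]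
  filter_upwards [hφ.ae_phiD_RLI_one hab hf, hne a, hne b] with x hx hxa hxb hxm
  rw [FracDE.RLD, hn, Function.iterate_succ_apply', ← hx hxm]
  exact hiter ⟨lt_of_le_of_ne hxm.1 hxa.symm, lt_of_le_of_ne hxm.2 hxb⟩
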